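/- Let P be a finite partially ordered set, n, m : P → ℕ, and let A (a square block matrix with row and column blocks of sizes n) and B (a block matrix with row blocks of sizes n and column blocks of sizes m) be real matrices lying in the block incidence algebra I(P). Then the following are equivalent: (1) there exist N : ℕ and real matrices A_K of size N×N, B_K of size N×(Σ i, n i), C_K of size (Σ i, m i)×N, and D_K of size (Σ i, m i)×(Σ i, n i) such that the transfer function K = C_K' * (X • 1 − A_K')⁻¹ * B_K' + D_K' over RatFunc ℝ satisfies K (i,a) (j,b) = 0 whenever ¬ (j ≤ i), and the closed-loop matrix, i.e. the real square matrix with 2×2 block form [[A + B*D_K, B*C_K],[B_K, A_K]], is Hurwitz; (2) for every i ∈ P the pair (A_ii, B_ii) of diagonal blocks is stabilizable. -/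

import Mathlib

set_option synthInstance.maxHeartbeats 1000000

/-- A block matrix, with rows indexed by `Σ i : P, Fin (n i)` and columns by
`Σ j : P, Fin (m j)`, lies in the block incidence algebra of the poset `P` if
the block `M_{ij}` vanishes whenever `¬ (j ≤ i)`. -/
def BlockIncidence {P : Type*} [PartialOrder P] {R : Type*} [Zero R] {n m : P → ℕ}
    (M : Matrix (Σ i : P, Fin (n i)) (Σ j : P, Fin (m j)) R) : Prop :=
  ∀ (i : P) (a : Fin (n i)) (j : P) (b : Fin (m j)), ¬ (j ≤ i) → M ⟨i, a⟩ ⟨j, b⟩ = 0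

/-- The `(i,i)` diagonal block of a block matrix. -/
def diagBlock {P : Type*} {R : Type*} {n m : P → ℕ}
    (M : Matrix (Σ i : P, Fin (n i)) (Σ j : P, Fin (m j)) R) (i : P) :
    Matrix (Fin (n i)) (Fin (m i)) R :=
  Matrix.of fun a b => M ⟨i, a⟩ ⟨i, b⟩

/-- The transfer function `C (X·1 − A)⁻¹ B + D` of the realization `(A, B, C, D)`,
a matrix over the field of rational functions. -/
noncomputable def transferFn {F : Type*} [Field F] {N m q : Type*} [Fintype N] [DecidableEq N]
    (A : Matrix N N F) (B : Matrix N m F) (C : Matrix q N F) (D : Matrix q m F) :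
    Matrix q m (RatFunc F) :=
  C.map RatFunc.C * ((RatFunc.X : RatFunc F) • (1 : Matrix N N (RatFunc F)) -
    A.map RatFunc.C)⁻¹ * B.map RatFunc.C + D.map RatFunc.C

/-- A real square matrix is Hurwitz if every complex eigenvalue has negative real part. -/
def IsHurwitz {k : Type*} [Fintype k] [DecidableEq k] (M : Matrix k k ℝ) : Prop :=
  ∀ z ∈ spectrum ℂ (M.map (algebraMap ℝ ℂ)), z.re < 0

/-- A pair `(A, B)` is stabilizable if some state feedback `K` makes `A + B K` Hurwitz. -/
def IsStabilizable {n m : ℕ} (A : Matrix (Fin n) (Fin n) ℝ)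
    (B : Matrix (Fin n) (Fin m) ℝ) : Prop :=
  ∃ K : Matrix (Fin m) (Fin n) ℝ, IsHurwitz (A + B * K)

/-!
The characteristic polynomial of a matrix in the incidence algebra is the product of those of its
diagonal blocks, so stabilizing feedbacks for the diagonal subsystems assemble into a
block-diagonal static controller.

Conversely, let `χ` be the closed-loop characteristic polynomial. The first block column of the
adjugate of `X - M`, with `M` the closed-loop matrix, gives polynomial matrices with
`(X - A) T - B L = χ` and `L = K T`. Hence `T = χ (X - A - B K)⁻¹`, and `T` and `L` lie in the
incidence algebra because it is closed under inverses, so the identity restricts to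
`(X - A_ii) T_ii - B_ii L_ii = χ` on each diagonal block. Replacing `L_ii` by `L_ii - F T_ii` turns
`A_ii` into `A_ii + B_ii F`, and substituting this matrix for `X` on the left shows that
`χ(A_ii + B_ii F)` maps into every `A_ii + B_ii F`-invariant subspace containing the range of
`B_ii`. Deadbeat control shifted to `-1` provides `F` and such a subspace on which
`A_ii + B_ii F + 1` is nilpotent; then `(X + 1)^r χ`, whose roots have negative real part,
annihilates `A_ii + B_ii F`.
-/

open Polynomial Matrix

section DiagonalBlocks

variable {P R : Type*} {n m : P → ℕ}

lemma diagBlock_add [Add R] (M N : Matrix (Σ i, Fin (n i)) (Σ j, Fin (m j)) R) (i : P) :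
    diagBlock (M + N) i = diagBlock M i + diagBlock N i := rfl

lemma diagBlock_sub [Sub R] (M N : Matrix (Σ i, Fin (n i)) (Σ j, Fin (m j)) R) (i : P) :
    diagBlock (M - N) i = diagBlock M i - diagBlock N i := rfl

lemma diagBlock_map {S : Type*} (f : R → S) (M : Matrix (Σ i, Fin (n i)) (Σ j, Fin (m j)) R)
    (i : P) : diagBlock (M.map f) i = (diagBlock M i).map f := rfl

variable [DecidableEq P]

lemma diagBlock_blockDiagonal' [Zero R] (M : ∀ i, Matrix (Fin (n i)) (Fin (m i)) R) (i : P) :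
    diagBlock (blockDiagonal' M) i = M i := by
  ext a b
  exact blockDiagonal'_apply_eq M i a b

lemma diagBlock_smul_one [Semiring R] (c : R) (i : P) :
    diagBlock (c • (1 : Matrix (Σ i, Fin (n i)) (Σ j, Fin (n j)) R)) i = c • 1 := by
  ext a b
  simp [diagBlock, one_apply]

lemma diagBlock_charmatrix [Fintype P] [CommRing R]
    (M : Matrix (Σ i, Fin (n i)) (Σ j, Fin (n j)) R) (i : P) :
    diagBlock (charmatrix M) i = charmatrix (diagBlock M i) := by
  ext a b : 2
  simp [diagBlock, charmatrix_apply, diagonal_apply]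

end DiagonalBlocks

section BlockIncidence

variable {P R : Type*} [PartialOrder P] {n m l : P → ℕ}

lemma BlockIncidence.map {S : Type*} [Semiring R] [Semiring S] (f : R →+* S)
    {M : Matrix (Σ i, Fin (n i)) (Σ j, Fin (m j)) R} (hM : BlockIncidence M) :
    BlockIncidence (M.map f) := fun i a j b hij => by
  rw [map_apply, hM i a j b hij, map_zero]

lemma BlockIncidence.of_map {S : Type*} [Semiring R] [Semiring S] {f : R →+* S}
    (hf : Function.Injective f) {M : Matrix (Σ i, Fin (n i)) (Σ j, Fin (m j)) R}
    (hM : BlockIncidence (M.map f)) : BlockIncidence M := fun i a j b hij =>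
  (map_eq_zero_iff f hf).1 (hM i a j b hij)

lemma BlockIncidence.add [AddZeroClass R] {M N : Matrix (Σ i, Fin (n i)) (Σ j, Fin (m j)) R}
    (hM : BlockIncidence M) (hN : BlockIncidence N) : BlockIncidence (M + N) :=
  fun i a j b hij => by rw [Matrix.add_apply, hM i a j b hij, hN i a j b hij, add_zero]

lemma BlockIncidence.sub [AddGroup R] {M N : Matrix (Σ i, Fin (n i)) (Σ j, Fin (m j)) R}
    (hM : BlockIncidence M) (hN : BlockIncidence N) : BlockIncidence (M - N) :=
  fun i a j b hij => by rw [Matrix.sub_apply, hM i a j b hij, hN i a j b hij, sub_zero]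

lemma BlockIncidence.smul {S : Type*} [Zero R] [SMulZeroClass S R]
    {M : Matrix (Σ i, Fin (n i)) (Σ j, Fin (m j)) R} (hM : BlockIncidence M) (c : S) :
    BlockIncidence (c • M) :=
  fun i a j b hij => by rw [Matrix.smul_apply, hM i a j b hij, smul_zero]

lemma BlockIncidence.mul [Fintype P] [NonUnitalNonAssocSemiring R]
    {M : Matrix (Σ i, Fin (n i)) (Σ j, Fin (m j)) R}
    {N : Matrix (Σ i, Fin (m i)) (Σ j, Fin (l j)) R}
    (hM : BlockIncidence M) (hN : BlockIncidence N) : BlockIncidence (M * N) := by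
  intro i a j b hij
  rw [mul_apply]
  refine Finset.sum_eq_zero fun ⟨k, c⟩ _ => ?_
  by_cases hki : k ≤ i
  · rw [hN k c j b fun hjk => hij (hjk.trans hki), mul_zero]
  · rw [hM i a k c hki, zero_mul]

lemma BlockIncidence.diagBlock_mul [Fintype P] [NonUnitalNonAssocSemiring R]
    {M : Matrix (Σ i, Fin (n i)) (Σ j, Fin (m j)) R}
    {N : Matrix (Σ i, Fin (m i)) (Σ j, Fin (l j)) R}
    (hM : BlockIncidence M) (hN : BlockIncidence N) (i : P) :
    diagBlock (M * N) i = diagBlock M i * diagBlock N i := by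
  ext a b
  simp only [diagBlock, of_apply, mul_apply]
  rw [Fintype.sum_sigma, Fintype.sum_eq_single i]
  refine fun j hji => Finset.sum_eq_zero fun c _ => ?_
  by_cases hle : j ≤ i
  · rw [hN j c i b fun hij => hji (le_antisymm hle hij), mul_zero]
  · rw [hM i a j c hle, zero_mul]

-- The upper sets `{i | p ≤ i}` separate the pairs with `¬ j ≤ i`, so the poset condition is a
-- family of two-block triangularity conditions.
lemma blockIncidence_iff_blockTriangular [Zero R] [DecidableLE P]
    {M : Matrix (Σ i, Fin (n i)) (Σ j, Fin (n j)) R} :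
    BlockIncidence M ↔ ∀ p, M.BlockTriangular fun x => decide ¬ p ≤ x.1 := by
  constructor
  · intro hM p x y hxy
    refine hM _ _ _ _ fun hle => ?_
    simp only [Bool.lt_iff, decide_eq_false_iff_not, not_not, decide_eq_true_eq] at hxy
    exact hxy.2 (hxy.1.trans hle)
  · intro hM i a j b hij
    exact hM j (by simp [Bool.lt_iff, hij])

variable [DecidableEq P]

lemma blockIncidence_blockDiagonal' [Zero R]
    (M : ∀ i, Matrix (Fin (n i)) (Fin (m i)) R) : BlockIncidence (blockDiagonal' M) :=
  fun _ _ _ _ hij => blockDiagonal'_apply_ne _ _ _ fun h => hij h.ge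

variable [Fintype P] [CommRing R] {M : Matrix (Σ i, Fin (n i)) (Σ j, Fin (n j)) R}

lemma BlockIncidence.inv (hM : BlockIncidence M) (hunit : IsUnit M) : BlockIncidence M⁻¹ := by
  classical
  have := hunit.invertible
  rw [blockIncidence_iff_blockTriangular] at hM ⊢
  exact fun p => blockTriangular_inv_of_blockTriangular (hM p)

lemma BlockIncidence.det (hM : BlockIncidence M) : M.det = ∏ i, (diagBlock M i).det := by
  let e : P ≃ (LinearExtension P)ᵒᵈ := (Equiv.refl P).trans OrderDual.toDual
  have hb : M.BlockTriangular fun x => e x.1 := fun x y hxy =>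
    hM _ _ _ _ fun hle => (toLinearExtension.monotone hle).not_gt hxy
  let _ : Fintype (LinearExtension P)ᵒᵈ := .ofEquiv P e
  rw [hb.det_fintype]
  refine (Fintype.prod_equiv e _ _ fun i => ?_).symm
  let fiberEquiv : {x : Σ i, Fin (n i) // e x.1 = e i} ≃ Fin (n i) :=
    (Equiv.subtypeEquivRight fun _ => e.apply_eq_iff_eq).trans (Equiv.sigmaSubtype i)
  exact det_submatrix_equiv_self fiberEquiv.symm (M.toSquareBlock (fun x => e x.1) (e i))

lemma BlockIncidence.charmatrix (hM : BlockIncidence M) :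
    BlockIncidence (Matrix.charmatrix M) := by
  intro i a j b hij
  rw [charmatrix_apply_ne _ _ _ fun h => hij (congrArg Sigma.fst h).ge, hM i a j b hij, map_zero,
    neg_zero]

lemma BlockIncidence.charpoly (hM : BlockIncidence M) :
    M.charpoly = ∏ i, (diagBlock M i).charpoly := by
  simp only [Matrix.charpoly, hM.charmatrix.det, diagBlock_charmatrix]

end BlockIncidence

section Hurwitz

variable {k l : Type*} [Fintype k] [DecidableEq k] [Fintype l] [DecidableEq l]

lemma isHurwitz_iff_charpoly {M : Matrix k k ℝ} :
    IsHurwitz M ↔ ∀ z : ℂ, aeval z M.charpoly = 0 → z.re < 0 := by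
  simp only [IsHurwitz, mem_spectrum_iff_isRoot_charpoly, charpoly_map, IsRoot.def,
    eval_map_algebraMap]

lemma isHurwitz_of_aeval_eq_zero {M : Matrix k k ℝ} {q : ℝ[X]} (hq : aeval M q = 0)
    (hroots : ∀ z : ℂ, aeval z q = 0 → z.re < 0) : IsHurwitz M := by
  intro z hz
  have hqz : aeval (M.map (algebraMap ℝ ℂ)) (q.map (algebraMap ℝ ℂ)) = 0 := by
    have := aeval_algHom_apply (Algebra.ofId ℝ ℂ).mapMatrix M q
    rw [hq, map_zero] at this
    rw [aeval_map_algebraMap]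
    exact this
  rw [← spectrum_toLin', ← Module.End.hasEigenvalue_iff_mem_spectrum,
    Module.End.hasEigenvalue_iff_isRoot, minpoly_toLin'] at hz
  have := hz.dvd (minpoly.dvd ℂ _ hqz)
  rw [IsRoot.def, eval_map_algebraMap] at this
  exact hroots z this

lemma isHurwitz_fromBlocks_zero₁₂ {A : Matrix k k ℝ} {C : Matrix l k ℝ} {D : Matrix l l ℝ} :
    IsHurwitz (fromBlocks A 0 C D) ↔ IsHurwitz A ∧ IsHurwitz D := by
  simp only [isHurwitz_iff_charpoly, charpoly_fromBlocks_zero₁₂, map_mul, mul_eq_zero, or_imp,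
    forall_and]

lemma BlockIncidence.isHurwitz_iff {P : Type*} [PartialOrder P] [Fintype P] [DecidableEq P]
    {n : P → ℕ} {M : Matrix (Σ i, Fin (n i)) (Σ j, Fin (n j)) ℝ} (hM : BlockIncidence M) :
    IsHurwitz M ↔ ∀ i, IsHurwitz (diagBlock M i) := by
  simp only [isHurwitz_iff_charpoly, hM.charpoly, map_prod, Finset.prod_eq_zero_iff,
    Finset.mem_univ, true_and, forall_exists_index]
  exact forall_comm

end Hurwitz

section ClosedLoop

lemma charmatrix_add {R n : Type*} [CommRing R] [Fintype n] [DecidableEq n]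
    (M N : Matrix n n R) : charmatrix (M + N) = charmatrix M - N.map C := by
  simp [charmatrix, sub_sub, Matrix.map_add]

variable {F N s u : Type*} [Field F] [Fintype N] [DecidableEq N]

lemma isUnit_map_charmatrix (A : Matrix N N F) :
    IsUnit ((charmatrix A).map (algebraMap F[X] (RatFunc F))) := by
  rw [isUnit_iff_isUnit_det, ← RingHom.mapMatrix_apply, ← RingHom.map_det]
  exact (map_ne_zero_iff _ (RatFunc.algebraMap_injective F)).2 (charpoly_monic A).ne_zero |>.isUnit

lemma map_C_map_algebraMap (M : Matrix s u F) :
    (M.map C).map (algebraMap F[X] (RatFunc F)) = M.map RatFunc.C := by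
  ext
  simp

lemma transferFn_eq (A : Matrix N N F) (B : Matrix N s F) (C₀ : Matrix u N F) (D : Matrix u s F) :
    transferFn A B C₀ D = C₀.map RatFunc.C *
      ((charmatrix A).map (algebraMap F[X] (RatFunc F)))⁻¹ * B.map RatFunc.C +
        D.map RatFunc.C := by
  rw [transferFn]
  congr
  ext i j
  simp [charmatrix_apply, diagonal_apply, one_apply, apply_ite]

variable [Fintype s] [DecidableEq s] [Fintype u]

lemma exists_charmatrix_mul_sub_eq_charpoly_smul (A : Matrix s s F) (B : Matrix s u F)
    (A_K : Matrix N N F) (B_K : Matrix N s F) (C_K : Matrix u N F) (D_K : Matrix u s F) :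
    ∃ (T : Matrix s s F[X]) (L : Matrix u s F[X]),
      charmatrix A * T - B.map C * L =
        (fromBlocks (A + B * D_K) (B * C_K) B_K A_K).charpoly • 1 ∧
      L.map (algebraMap F[X] (RatFunc F)) =
        transferFn A_K B_K C_K D_K * T.map (algebraMap F[X] (RatFunc F)) := by
  set M := fromBlocks (A + B * D_K) (B * C_K) B_K A_K with hM
  set φ := algebraMap F[X] (RatFunc F)
  let G := (charmatrix M).adjugate
  have hG : charmatrix M * G = M.charpoly • 1 := mul_adjugate _
  rw [← fromBlocks_toBlocks G, hM, charmatrix_fromBlocks, fromBlocks_multiply, ← fromBlocks_one,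
    fromBlocks_smul, fromBlocks_inj] at hG
  obtain ⟨h₁₁, -, h₂₁, -⟩ := hG
  refine ⟨G.toBlocks₁₁, D_K.map C * G.toBlocks₁₁ + C_K.map C * G.toBlocks₂₁, ?_, ?_⟩
  · rw [← h₁₁, charmatrix_add, Matrix.map_mul, Matrix.map_mul]
    simp only [Matrix.mul_add, Matrix.sub_mul, Matrix.neg_mul, Matrix.mul_assoc]
    abel
  · have hstate : (charmatrix A_K).map φ * G.toBlocks₂₁.map φ =
        B_K.map RatFunc.C * G.toBlocks₁₁.map φ := by
      rw [smul_zero, Matrix.neg_mul, neg_add_eq_zero] at h₂₁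
      rw [← map_C_map_algebraMap, ← Matrix.map_mul, ← Matrix.map_mul, h₂₁]
    have hsolve : G.toBlocks₂₁.map φ =
        ((charmatrix A_K).map φ)⁻¹ * (B_K.map RatFunc.C * G.toBlocks₁₁.map φ) := by
      rw [← hstate, nonsing_inv_mul_cancel_left]
      exact (isUnit_iff_isUnit_det _).1 (isUnit_map_charmatrix A_K)
    rw [Matrix.map_add φ (map_add φ), Matrix.map_mul, Matrix.map_mul, map_C_map_algebraMap,
      map_C_map_algebraMap, hsolve, transferFn_eq, Matrix.add_mul, add_comm]
    simp only [Matrix.mul_assoc, φ]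

end ClosedLoop

section Substitution

variable {R n m : Type*} [CommRing R] [Fintype n] [DecidableEq n]

/-- Left substitution of `A` for the indeterminate in a polynomial vector, `∑ Xᵏ vₖ ↦ ∑ Aᵏ vₖ`,
with values in the `R[X]`-module on which `X` acts as `A`. -/
noncomputable def evalVec (A : Matrix n n R) : (n → R[X]) →ₗ[R[X]] Module.AEval' (toLin' A) :=
  Fintype.linearCombination R[X] fun i => Module.AEval'.of (toLin' A) (Pi.single i 1)

lemma evalVec_C (A : Matrix n n R) (v : n → R) :
    evalVec A (C ∘ v) = Module.AEval'.of (toLin' A) v := by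
  conv_rhs => rw [pi_eq_sum_univ' v]
  simp [evalVec, Fintype.linearCombination_apply]

lemma evalVec_map_C_mulVec [Fintype m] (A : Matrix n n R) (M : Matrix n m R) (l : m → R[X]) :
    evalVec A (M.map C *ᵥ l) = ∑ j, l j • Module.AEval'.of (toLin' A) (M.col j) := by
  have hcol : ∀ j, M.col j = ∑ i, M i j • (Pi.single i 1 : n → R) := fun j =>
    pi_eq_sum_univ' (M.col j)
  simp only [evalVec, Fintype.linearCombination_apply, mulVec, dotProduct, Finset.sum_smul, hcol,
    map_sum, map_smul, Finset.smul_sum, map_apply]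
  rw [Finset.sum_comm]
  refine Finset.sum_congr rfl fun j _ => Finset.sum_congr rfl fun i _ => ?_
  rw [mul_comm, mul_smul, Module.AEval.C_smul]

lemma evalVec_charmatrix_mulVec (A : Matrix n n R) (t : n → R[X]) :
    evalVec A (charmatrix A *ᵥ t) = 0 := by
  rw [charmatrix, sub_mulVec, map_sub, RingHom.mapMatrix_apply, evalVec_map_C_mulVec,
    scalar_apply, sub_eq_zero]
  simp only [evalVec, Fintype.linearCombination_apply, mulVec_diagonal, mul_comm X, mul_smul,
    Module.AEval'.X_smul_of, toLin'_apply, mulVec_single_one]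

lemma aeval_toLin'_mem [Fintype m] {A : Matrix n n R} {B : Matrix n m R} {T : Matrix n n R[X]}
    {L : Matrix m n R[X]} {χ : R[X]} (h : charmatrix A * T - B.map C * L = χ • 1)
    {S : Submodule R (n → R)} (hA : S ∈ Module.End.invtSubmodule (toLin' A))
    (hB : LinearMap.range B.mulVecLin ≤ S) (v : n → R) :
    aeval (toLin' A) χ v ∈ S := by
  let S' := Module.AEval.mapSubmodule R (n → R) (toLin' A) ⟨S, hA⟩
  have hmem : ∀ w, Module.AEval'.of (toLin' A) w ∈ S' ↔ w ∈ S := fun w => by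
    simp [S']
  have hBL : evalVec A (B.map C *ᵥ (L *ᵥ (C ∘ v))) ∈ S' := by
    rw [evalVec_map_C_mulVec]
    refine S'.sum_mem fun j _ => S'.smul_mem _ ((hmem _).2 (hB ?_))
    rw [range_mulVecLin]
    exact Submodule.subset_span ⟨j, rfl⟩
  have hχ : evalVec A (χ • (C ∘ v)) = -evalVec A (B.map C *ᵥ (L *ᵥ (C ∘ v))) := by
    rw [← one_mulVec (C ∘ v), ← smul_mulVec, ← h, sub_mulVec, map_sub, ← mulVec_mulVec,
      evalVec_charmatrix_mulVec, zero_sub, one_mulVec, mulVec_mulVec]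
  rw [map_smul, evalVec_C, ← Module.AEval.of_aeval_smul] at hχ
  exact (hmem _).1 (hχ ▸ S'.neg_mem hBL)

end Substitution

section Deadbeat

lemma pow_apply_eq_of_eqOn {R M : Type*} [Semiring R] [AddCommMonoid M] [Module R M]
    {f₁ f₂ : M →ₗ[R] M} {S : Submodule R M} (h : Set.EqOn f₁ f₂ S)
    (hS : S ∈ Module.End.invtSubmodule f₁) (r : ℕ) {x : M} (hx : x ∈ S) :
    (f₁ ^ r) x = (f₂ ^ r) x := by
  induction r generalizing x with
  | zero => rfl
  | succ r ih =>
    rw [pow_succ, pow_succ, Module.End.mul_apply, Module.End.mul_apply, ih (hS hx), h hx]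

variable {F V U : Type*} [Field F] [AddCommGroup V] [Module F V] [AddCommGroup U] [Module F U]
  {f : V →ₗ[F] V} {g : U →ₗ[F] V} {S : Submodule F V}

/-- A subspace `S` is deadbeat for the pair `(f, g)` if some feedback `k` makes it invariant under
the closed-loop map `f + g ∘ k` and steers all of it to zero in a bounded number of steps. -/
def IsDeadbeat (f : V →ₗ[F] V) (g : U →ₗ[F] V) (S : Submodule F V) : Prop :=
  ∃ (k : V →ₗ[F] U) (r : ℕ), S ∈ Module.End.invtSubmodule (f + g ∘ₗ k) ∧
    S ≤ LinearMap.ker ((f + g ∘ₗ k) ^ r)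

lemma isDeadbeat_bot : IsDeadbeat f g ⊥ :=
  ⟨0, 0, Module.End.invtSubmodule.bot_mem _, bot_le⟩

lemma IsDeadbeat.sup_span_singleton (hS : IsDeadbeat f g S) {x : V} (hxS : x ∉ S)
    (hfx : f x ∈ S ⊔ LinearMap.range g) : IsDeadbeat f g (S ⊔ Submodule.span F {x}) := by
  obtain ⟨k, r, hinv, hker⟩ := hS
  obtain ⟨s, hs, _, ⟨u, rfl⟩, hsu⟩ := Submodule.mem_sup.1 hfx
  obtain ⟨φ, hφx, hφS⟩ := Submodule.exists_le_ker_of_notMem hxS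
  let k' : V →ₗ[F] U := k + φ.smulRight ((φ x)⁻¹ • (-u - k x))
  have heq : Set.EqOn ⇑(f + g ∘ₗ k) ⇑(f + g ∘ₗ k' : V →ₗ[F] V) S := fun y hy => by
    have : φ y = 0 := hφS hy
    simp [k', this]
  have hx : (f + g ∘ₗ k') x = s := by
    simp [k', smul_smul, hφx, ← hsu]
  have hstep : S ⊔ Submodule.span F {x} ≤ S.comap (f + g ∘ₗ k') := by
    refine sup_le (fun y hy => ?_) ((Submodule.span_singleton_le_iff_mem _ _).2 ?_)
    · rw [Submodule.mem_comap, ← heq hy]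
      exact hinv hy
    · exact Submodule.mem_comap.2 (hx ▸ hs)
  refine ⟨k', r + 1, hstep.trans (Submodule.comap_mono le_sup_left), fun y hy => ?_⟩
  rw [LinearMap.mem_ker, pow_succ, Module.End.mul_apply,
    ← pow_apply_eq_of_eqOn heq hinv r (hstep hy)]
  exact hker (hstep hy)

lemma IsDeadbeat.le_comap (hS : IsDeadbeat f g S) :
    S ≤ (S ⊔ LinearMap.range g).comap f := by
  obtain ⟨k, r, hinv, -⟩ := hS
  intro x hx
  have : f x = (f + g ∘ₗ k) x + g (-k x) := by simp
  rw [Submodule.mem_comap, this]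
  exact Submodule.add_mem_sup (hinv hx) ⟨_, rfl⟩

-- For `S` maximal, `f` embeds `V ⧸ S` in `V ⧸ (S ⊔ range g)`, so the two have equal dimension.
lemma exists_isDeadbeat_range_le [FiniteDimensional F V] (f : V →ₗ[F] V) (g : U →ₗ[F] V) :
    ∃ S, IsDeadbeat f g S ∧ LinearMap.range g ≤ S := by
  obtain ⟨S, hS, hmax⟩ := (wellFounded_gt (α := Submodule F V)).has_min {S | IsDeadbeat f g S}
    ⟨⊥, isDeadbeat_bot⟩
  refine ⟨S, hS, ?_⟩
  let T := S ⊔ LinearMap.range g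
  have hcomap : T.comap f ≤ S := fun x hfx => by
    by_contra hxS
    refine hmax _ (hS.sup_span_singleton hxS hfx) (left_lt_sup.2 fun hle => hxS ?_)
    exact (Submodule.span_singleton_le_iff_mem _ _).1 hle
  have hinj : Function.Injective (S.mapQ T f hS.le_comap) := by
    rw [← LinearMap.ker_eq_bot, Submodule.ker_mapQ, hcomap.antisymm hS.le_comap]
    exact Submodule.mkQ_map_self S
  have hrank := LinearMap.finrank_le_finrank_of_injective hinj
  have hS_rank := S.finrank_quotient_add_finrank
  have hT_rank := T.finrank_quotient_add_finrank
  have hST : S = T := Submodule.eq_of_le_of_finrank_le le_sup_left (by lia)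
  exact hST ▸ le_sup_right

end Deadbeat

section Stabilization

variable {F n m : Type*} [Field F] [Fintype n] [DecidableEq n] [Fintype m]

lemma exists_feedback_aeval_eq_zero {A : Matrix n n F} {B : Matrix n m F} {T : Matrix n n F[X]}
    {L : Matrix m n F[X]} {χ : F[X]} (h : charmatrix A * T - B.map C * L = χ • 1) (μ : F) :
    ∃ (K : Matrix m n F) (r : ℕ), aeval (A + B * K) ((X - C μ) ^ r * χ) = 0 := by
  classical
  obtain ⟨S, ⟨k, r, hinv, hker⟩, hB⟩ :=
    exists_isDeadbeat_range_le (toLin' A - algebraMap F _ μ) B.mulVecLin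
  let K := LinearMap.toMatrix' k
  have hcl : toLin' A - algebraMap F _ μ + B.mulVecLin ∘ₗ k =
      toLin' (A + B * K) - algebraMap F _ μ := by
    rw [map_add, toLin'_mul, toLin'_toMatrix', toLin'_apply' B, sub_add_eq_add_sub]
  rw [hcl] at hinv hker
  have hA : S ∈ Module.End.invtSubmodule (toLin' (A + B * K)) := fun x hx => by
    simpa using S.add_mem (hinv hx) (S.smul_mem μ hx)
  have h' : charmatrix (A + B * K) * T - B.map C * (L - K.map C * T) = χ • 1 := by
    rw [← h, charmatrix_add, Matrix.map_mul, Matrix.sub_mul, Matrix.mul_sub, Matrix.mul_assoc]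
    abel
  refine ⟨K, r, toLinAlgEquiv'.injective (LinearMap.ext fun v => ?_)⟩
  rw [← aeval_algHom_apply, map_mul, map_pow, map_sub, aeval_X, aeval_C, map_zero]
  exact hker (aeval_toLin'_mem h' hA hB v)

lemma isStabilizable_of_charmatrix_mul_sub {n m : ℕ} {A : Matrix (Fin n) (Fin n) ℝ}
    {B : Matrix (Fin n) (Fin m) ℝ} {T : Matrix (Fin n) (Fin n) ℝ[X]}
    {L : Matrix (Fin m) (Fin n) ℝ[X]} {χ : ℝ[X]}
    (h : charmatrix A * T - B.map C * L = χ • 1)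
    (hroots : ∀ z : ℂ, aeval z χ = 0 → z.re < 0) : IsStabilizable A B := by
  obtain ⟨K, r, hK⟩ := exists_feedback_aeval_eq_zero h (-1)
  refine ⟨K, isHurwitz_of_aeval_eq_zero hK fun z hz => ?_⟩
  rw [map_mul, map_pow, mul_eq_zero] at hz
  refine hz.elim (fun hz => ?_) (hroots z)
  have : z = -1 := by
    simpa [eq_neg_iff_add_eq_zero] using eq_zero_of_pow_eq_zero hz
  simp [this]

end Stabilization

section PosetCausal

variable {P : Type*} [PartialOrder P] [Fintype P] [DecidableEq P] {n m : P → ℕ}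

lemma BlockIncidence.of_mul_eq_smul_one {F : Type*} [Field F]
    {M T : Matrix (Σ i, Fin (n i)) (Σ j, Fin (n j)) F} (hM : BlockIncidence M) {c : F}
    (hc : c ≠ 0) (h : M * T = c • 1) : BlockIncidence T := by
  have hinv : M * (c⁻¹ • T) = 1 := by rw [Matrix.mul_smul, h, inv_smul_smul₀ hc]
  have hT : T = c • M⁻¹ := by rw [inv_eq_right_inv hinv, smul_inv_smul₀ hc]
  exact hT ▸ (hM.inv (IsUnit.of_mul_eq_one _ hinv)).smul c

lemma exists_blockIncidence_charmatrix_mul_sub {F N : Type*} [Field F] [Fintype N] [DecidableEq N]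
    {A : Matrix (Σ i, Fin (n i)) (Σ j, Fin (n j)) F}
    {B : Matrix (Σ i, Fin (n i)) (Σ j, Fin (m j)) F}
    (hA : BlockIncidence A) (hB : BlockIncidence B) {A_K : Matrix N N F}
    {B_K : Matrix N (Σ j, Fin (n j)) F} {C_K : Matrix (Σ i, Fin (m i)) N F}
    {D_K : Matrix (Σ i, Fin (m i)) (Σ j, Fin (n j)) F}
    (hK : BlockIncidence (transferFn A_K B_K C_K D_K)) :
    ∃ (T : Matrix (Σ i, Fin (n i)) (Σ j, Fin (n j)) F[X])
      (L : Matrix (Σ i, Fin (m i)) (Σ j, Fin (n j)) F[X]),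
      BlockIncidence T ∧ BlockIncidence L ∧ charmatrix A * T - B.map C * L =
        (fromBlocks (A + B * D_K) (B * C_K) B_K A_K).charpoly • 1 := by
  obtain ⟨T, L, hTL, hL⟩ := exists_charmatrix_mul_sub_eq_charpoly_smul A B A_K B_K C_K D_K
  set χ := (fromBlocks (A + B * D_K) (B * C_K) B_K A_K).charpoly
  set K := transferFn A_K B_K C_K D_K
  set φ := algebraMap F[X] (RatFunc F)
  have hφ : Function.Injective φ := RatFunc.algebraMap_injective F
  have hχ : φ χ ≠ 0 := (map_ne_zero_iff φ hφ).2 (charpoly_monic _).ne_zero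
  have hM : BlockIncidence ((charmatrix A).map φ - (B.map C).map φ * K) :=
    (hA.charmatrix.map φ).sub (((hB.map C).map φ).mul hK)
  have hMT : ((charmatrix A).map φ - (B.map C).map φ * K) * T.map φ = φ χ • 1 := by
    rw [Matrix.sub_mul, Matrix.mul_assoc, ← hL, ← Matrix.map_mul, ← Matrix.map_mul,
      ← Matrix.map_sub φ (map_sub φ), hTL, smul_one_eq_diagonal, diagonal_map (map_zero φ),
      smul_one_eq_diagonal]
  have hT := hM.of_mul_eq_smul_one hχ hMT
  exact ⟨T, L, hT.of_map hφ, .of_map hφ (hL ▸ hK.mul hT), hTL⟩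

end PosetCausal

/-- A poset-causal system is stabilizable by a poset-causal (dynamic, state-feedback)
controller if and only if all the diagonal sub-systems `(A_ii, B_ii)` are stabilizable. -/
theorem posetCausal_stabilizable_iff {P : Type*} [PartialOrder P] [Fintype P] [DecidableEq P]
    (n m : P → ℕ)
    (A : Matrix (Σ i : P, Fin (n i)) (Σ j : P, Fin (n j)) ℝ)
    (B : Matrix (Σ i : P, Fin (n i)) (Σ j : P, Fin (m j)) ℝ)
    (hA : BlockIncidence A) (hB : BlockIncidence B) :
    (∃ (N : ℕ)
       (A_K : Matrix (Fin N) (Fin N) ℝ)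
       (B_K : Matrix (Fin N) (Σ j : P, Fin (n j)) ℝ)
       (C_K : Matrix (Σ i : P, Fin (m i)) (Fin N) ℝ)
       (D_K : Matrix (Σ i : P, Fin (m i)) (Σ j : P, Fin (n j)) ℝ),
       (∀ (i : P) (a : Fin (m i)) (j : P) (b : Fin (n j)), ¬ (j ≤ i) →
         transferFn A_K B_K C_K D_K ⟨i, a⟩ ⟨j, b⟩ = 0) ∧
       IsHurwitz (Matrix.fromBlocks (A + B * D_K) (B * C_K) B_K A_K)) ↔
    (∀ i : P, IsStabilizable (diagBlock A i) (diagBlock B i)) := by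
  constructor
  · rintro ⟨N, A_K, B_K, C_K, D_K, hK, hH⟩ i
    obtain ⟨T, L, hT, hL, hTL⟩ := exists_blockIncidence_charmatrix_mul_sub hA hB hK
    have hdiag := congrArg (diagBlock · i) hTL
    simp only [diagBlock_sub, hA.charmatrix.diagBlock_mul hT, (hB.map C).diagBlock_mul hL,
      diagBlock_charmatrix, diagBlock_map, diagBlock_smul_one] at hdiag
    exact isStabilizable_of_charmatrix_mul_sub hdiag (isHurwitz_iff_charpoly.1 hH)
  · intro h
    choose K hK using h
    have hD := blockIncidence_blockDiagonal' K
    refine ⟨0, 0, 0, 0, blockDiagonal' K, fun i a j b hij => ?_, ?_⟩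
    · simp [transferFn, hD i a j b hij]
    · rw [Matrix.mul_zero, isHurwitz_fromBlocks_zero₁₂, (hA.add (hB.mul hD)).isHurwitz_iff]
      refine ⟨fun i => ?_, fun z hz => ?_⟩
      · rw [diagBlock_add, hB.diagBlock_mul hD, diagBlock_blockDiagonal']
        exact hK i
      · exact absurd hz (by simp [spectrum.of_subsingleton])
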